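/- arXiv:2002.12155 — 4 statements merged into one kernel-verified Lean document; each statement's English description precedes it below -/
import Mathlib

section
/- Let j, k, r be positive integers such that j and j+k have the same set of prime divisors, and let g = gcd(j, j+k). Suppose p = (j/g)·r + 1 and q = ((j+k)/g)·r + 1 are both prime, p does not divide j+k, and q does not divide j. Then n = j·q satisfies φ(n) = φ(n+k). -/
/-!
Since `φ(n) / n` depends only on the primes dividing `n`, numbers `m`, `n` with the same prime
factors have totients in the same ratio as `m : n = a : b`. If `p = a * r + 1` and `q = b * r + 1`
are primes, then `φ(q) : φ(p) = b : a`, so the two ratios cancel in `φ(m * q) = φ(n * p)`, while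
`m * q` and `n * p` still differ by `n - m` because `m * b = n * a`.
-/

theorem totient_mul_eq_totient_mul_of_primeFactors_eq {m n a b : ℕ}
    (hmn : m.primeFactors = n.primeFactors) (hab : m * b = n * a) :
    m.totient * b = n.totient * a := by
  qify at hab ⊢
  calc (m.totient : ℚ) * b
      = m * b * ∏ p ∈ n.primeFactors, (1 - (p : ℚ)⁻¹) := by
        rw [Nat.totient_eq_mul_prod_factors, hmn, mul_right_comm]
    _ = n.totient * a := by
        rw [hab, Nat.totient_eq_mul_prod_factors n, mul_right_comm]

theorem totient_mul_succ_of_prime_of_not_dvd {n s : ℕ} (hs : (s + 1).Prime) (hn : ¬ s + 1 ∣ n) :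
    (n * (s + 1)).totient = n.totient * s := by
  rw [mul_comm n, Nat.totient_mul_of_prime_of_not_dvd hs hn, Nat.add_sub_cancel, mul_comm]

theorem totient_mul_prime_eq_totient_mul_prime {m n a b r : ℕ}
    (hmn : m.primeFactors = n.primeFactors) (hab : m * b = n * a)
    (hp : (a * r + 1).Prime) (hq : (b * r + 1).Prime)
    (hpn : ¬ a * r + 1 ∣ n) (hqm : ¬ b * r + 1 ∣ m) :
    (m * (b * r + 1)).totient = (n * (a * r + 1)).totient := by
  calc (m * (b * r + 1)).totient
      = m.totient * (b * r) := totient_mul_succ_of_prime_of_not_dvd hq hqm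
    _ = n.totient * (a * r) := by
        rw [← mul_assoc, totient_mul_eq_totient_mul_of_primeFactors_eq hmn hab, mul_assoc]
    _ = (n * (a * r + 1)).totient := (totient_mul_succ_of_prime_of_not_dvd hp hpn).symm

theorem mul_div_eq_mul_div_of_dvd {m n d : ℕ} (hm : d ∣ m) (hn : d ∣ n) :
    m * (n / d) = n * (m / d) := by
  rw [← Nat.mul_div_assoc m hn, ← Nat.mul_div_assoc n hm, mul_comm]

/-- If `j` and `j+k` have the same prime factors, `g = gcd(j, j+k)`,
`p = (j/g)·r + 1` and `q = ((j+k)/g)·r + 1` are both prime with `p ∤ j+k` and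
`q ∤ j`, then `n = j·q` satisfies `φ(n) = φ(n+k)`. -/
theorem stmt_1 (j k r : ℕ) (hj : 0 < j) (hk : 0 < k) (hr : 0 < r)
    (hpf : j.primeFactors = (j + k).primeFactors)
    (p q : ℕ)
    (hpdef : p = j / Nat.gcd j (j + k) * r + 1)
    (hqdef : q = (j + k) / Nat.gcd j (j + k) * r + 1)
    (hp : p.Prime) (hq : q.Prime)
    (hpnd : ¬ p ∣ (j + k)) (hqnd : ¬ q ∣ j) :
    Nat.totient (j * q) = Nat.totient (j * q + k) := by
  have hcross : j * ((j + k) / j.gcd (j + k)) = (j + k) * (j / j.gcd (j + k)) :=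
    mul_div_eq_mul_div_of_dvd (j.gcd_dvd_left (j + k)) (j.gcd_dvd_right (j + k))
  have hshift : j * q + k = (j + k) * p := by
    rw [hpdef, hqdef]
    linear_combination r * hcross
  rw [hshift]
  subst hpdef hqdef
  exact totient_mul_prime_eq_totient_mul_prime hpf hcross hp hq hpnd hqnd
end

section
/- Let a < b be positive integers, a' = a/gcd(a,b), b' = b/gcd(a,b), and let s = ∏_{p | a'b'} p be the product of the distinct primes dividing a'b'. Let ℓ and r be positive integers such that p = a'r+1 and q = b'r+1 are both prime, p does not divide b'·ℓ·s, and q does not divide a'·ℓ·s. Then the numbers m₁ = b'·ℓ·s·(a'r+1) and m₂ = a'·ℓ·s·(b'r+1) satisfy φ(m₁) = φ(m₂) and m₁ − m₂ = ℓ·κ(a,b). -/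
/-- For positive integers `a < b`, with `a' = a/gcd(a,b)`, `b' = b/gcd(a,b)`,
`κ(a,b) = (b' - a') · ∏_{p | a'b'} p`. -/
def kappa (a b : ℕ) : ℕ :=
  (b / Nat.gcd a b - a / Nat.gcd a b) *
    ∏ p ∈ ((a / Nat.gcd a b) * (b / Nat.gcd a b)).primeFactors, p

/-!
If every prime factor of `n` divides `t`, then `φ (n * t) = n * φ t`. The factor `s` makes this
applicable to both `a'` and `b'` with `t = ℓ * s`, while the primes `p = a' * r + 1` and
`q = b' * r + 1` contribute `a' * r` and `b' * r`. Hence both totients equal `a' * b' * r * φ t`.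
In `m₁ - m₂` the common term `a' * b' * r * t` cancels and leaves `(b' - a') * t`.
-/

lemma totient_mul_of_primeFactors_subset {m n : ℕ} (h : m.primeFactors ⊆ n.primeFactors) :
    Nat.totient (m * n) = m * Nat.totient n := by
  rcases eq_or_ne m 0 with rfl | hm
  · simp
  rcases eq_or_ne n 0 with rfl | hn
  · simp
  have hmn : (m * n).primeFactors = n.primeFactors := by
    rw [Nat.primeFactors_mul hm hn, Finset.union_eq_right.mpr h]
  rw [← Nat.cast_inj (R := ℚ), Nat.totient_eq_mul_prod_factors, hmn, Nat.cast_mul, Nat.cast_mul,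
    Nat.totient_eq_mul_prod_factors, mul_assoc]

lemma totient_mul_mul_prime {n t p : ℕ} (hp : p.Prime) (hnt : n.primeFactors ⊆ t.primeFactors)
    (hpnt : ¬ p ∣ n * t) : Nat.totient (n * t * p) = n * (p - 1) * Nat.totient t := by
  rw [mul_comm (n * t), Nat.totient_mul_of_prime_of_not_dvd hp hpnt,
    totient_mul_of_primeFactors_subset hnt]
  ring

lemma totient_mul_mul_succ_comm {a b r t : ℕ} (hp : (a * r + 1).Prime) (hq : (b * r + 1).Prime)
    (hat : a.primeFactors ⊆ t.primeFactors) (hbt : b.primeFactors ⊆ t.primeFactors)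
    (hpbt : ¬ a * r + 1 ∣ b * t) (hqat : ¬ b * r + 1 ∣ a * t) :
    Nat.totient (b * t * (a * r + 1)) = Nat.totient (a * t * (b * r + 1)) := by
  rw [totient_mul_mul_prime hp hbt hpbt, totient_mul_mul_prime hq hat hqat,
    Nat.add_sub_cancel, Nat.add_sub_cancel, mul_left_comm b]

lemma primeFactors_subset_primeFactors_mul_prod {d n l : ℕ} (hd : d ∣ n) (hn : n ≠ 0)
    (hl : l ≠ 0) : d.primeFactors ⊆ (l * ∏ p ∈ n.primeFactors, p).primeFactors := by
  have hprod : ∏ p ∈ n.primeFactors, p ≠ 0 :=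
    Finset.prod_ne_zero_iff.mpr fun _ hp ↦ (Nat.prime_of_mem_primeFactors hp).ne_zero
  calc d.primeFactors ⊆ n.primeFactors := Nat.primeFactors_mono hd hn
    _ = (∏ p ∈ n.primeFactors, p).primeFactors := (Nat.primeFactors_prod_primeFactors n).symm
    _ ⊆ _ := Nat.primeFactors_mono (dvd_mul_left _ l) (mul_ne_zero hl hprod)

lemma mul_mul_succ_sub_mul_mul_succ (a b r t : ℕ) :
    b * t * (a * r + 1) - a * t * (b * r + 1) = (b - a) * t := by
  calc b * t * (a * r + 1) - a * t * (b * r + 1)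
      = (a * b * r * t + b * t) - (a * b * r * t + a * t) := by congr 1 <;> ring
    _ = (b - a) * t := by rw [Nat.add_sub_add_left, Nat.sub_mul]

/-- With `a' = a/gcd(a,b)`, `b' = b/gcd(a,b)`, `s = ∏_{p | a'b'} p`: if
`a'r+1` and `b'r+1` are primes not dividing `b'ℓs` resp. `a'ℓs`, then
`m₁ = b'ℓs(a'r+1)` and `m₂ = a'ℓs(b'r+1)` satisfy `φ(m₁) = φ(m₂)` and
`m₁ - m₂ = ℓ·κ(a,b)`. -/
theorem stmt_3 (a b ℓ r : ℕ) (ha : 0 < a) (hab : a < b) (hl : 0 < ℓ) (hr : 0 < r)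
    (a' b' s p q m₁ m₂ : ℕ)
    (ha' : a' = a / Nat.gcd a b) (hb' : b' = b / Nat.gcd a b)
    (hs : s = ∏ p ∈ (a' * b').primeFactors, p)
    (hpdef : p = a' * r + 1) (hqdef : q = b' * r + 1)
    (hp : p.Prime) (hq : q.Prime)
    (hpnd : ¬ p ∣ b' * ℓ * s) (hqnd : ¬ q ∣ a' * ℓ * s)
    (hm₁ : m₁ = b' * ℓ * s * (a' * r + 1)) (hm₂ : m₂ = a' * ℓ * s * (b' * r + 1)) :
    Nat.totient m₁ = Nat.totient m₂ ∧ m₁ - m₂ = ℓ * kappa a b := by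
  have ha₀ : a' ≠ 0 := by
    rintro rfl
    simp [hpdef, Nat.not_prime_one] at hp
  have hb₀ : b' ≠ 0 := by
    rintro rfl
    simp [hqdef, Nat.not_prime_one] at hq
  have hsub {d : ℕ} (hd : d ∣ a' * b') : d.primeFactors ⊆ (ℓ * s).primeFactors :=
    hs ▸ primeFactors_subset_primeFactors_mul_prod hd (mul_ne_zero ha₀ hb₀) hl.ne'
  have hkappa : kappa a b = (b' - a') * s := by rw [kappa, hs, ha', hb']
  rw [mul_assoc b' ℓ s] at hpnd hm₁
  rw [mul_assoc a' ℓ s] at hqnd hm₂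
  subst hpdef hqdef hm₁ hm₂
  constructor
  · exact totient_mul_mul_succ_comm hp hq (hsub (dvd_mul_right a' b')) (hsub (dvd_mul_left b' a'))
      hpnd hqnd
  · rw [mul_mul_succ_sub_mul_mul_succ, hkappa, mul_left_comm]
end

section
/- Assume that for every choice of 5 pairwise distinct positive integers a₁, …, a₅ there exist indices i ≠ j such that there are infinitely many positive integers n with aᵢn+1 and aⱼn+1 both prime. Then for every positive integer k divisible by 30, the equation φ(n) = φ(n+k) has infinitely many solutions n. -/
/-!
If `p = a * n + 1` and `q = b * n + 1` are primes, then `a * (q - 1) = b * (p - 1)`, whereas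
`b * p - a * q = b - a`. Multiply by an `m` containing every prime factor of `a * b`: then
`φ (m * a * q) = φ m * a * (q - 1) = φ m * b * (p - 1) = φ (m * b * p)`, and the two arguments
differ by `m * (b - a)`. A common factor of `a` and `b` can be absorbed into `n`, so this
produces the shift `k` whenever `k` is a multiple of `(b - a) * radical (a * b)` computed from the
reduced pair. For any two of `1, 2, 3, 4, 6` that number divides `30`.
-/

open UniqueFactorizationMonoid (radical radical_dvd_radical)

theorem totient_mul_of_radical_dvd {m a : ℕ} (h : radical a ∣ m) :
    (m * a).totient = m.totient * a := by
  obtain rfl | hm := eq_or_ne m 0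
  · simp
  obtain rfl | ha := eq_or_ne a 0
  · simp
  have hfactors : (m * a).primeFactors = m.primeFactors := by
    rw [Nat.primeFactors_mul hm ha, Finset.union_eq_left]
    exact (Nat.radical_dvd_iff hm).1 h
  have hcast : ((m * a).totient : ℚ) = m.totient * a := by
    rw [Nat.totient_eq_mul_prod_factors, hfactors, Nat.totient_eq_mul_prod_factors m]
    push_cast
    ring
  exact_mod_cast hcast

theorem totient_mul_mul_prime_s11 {m a p : ℕ} (h : radical a ∣ m) (hp : p.Prime)
    (hpos : 0 < m * a) (hlt : m * a < p) :
    (m * a * p).totient = m.totient * (a * (p - 1)) := by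
  have hcop : (m * a).Coprime p := (Nat.coprime_of_lt_prime hpos.ne' hlt hp).symm
  rw [Nat.totient_mul hcop, totient_mul_of_radical_dvd h, Nat.totient_prime hp, mul_assoc]

theorem totient_eq_totient_add_of_prime {m a b n : ℕ} (hm : 0 < m) (hab : a < b)
    (ha : radical a ∣ m) (hb : radical b ∣ m)
    (hp : (a * n + 1).Prime) (hq : (b * n + 1).Prime) (hn : m * b < n) :
    (m * a * (b * n + 1)).totient = (m * a * (b * n + 1) + m * (b - a)).totient := by
  have ha0 : 0 < a := Nat.pos_of_ne_zero fun h => Nat.not_prime_one (by simpa [h] using hp)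
  have hb0 : 0 < b := ha0.trans hab
  have hshift : m * a * (b * n + 1) + m * (b - a) = m * b * (a * n + 1) := by
    obtain ⟨d, rfl⟩ := Nat.exists_eq_add_of_lt hab
    rw [show a + d + 1 - a = d + 1 by omega]
    ring
  have hltp : m * b < a * n + 1 := by nlinarith
  have hltq : m * a < b * n + 1 := by nlinarith
  rw [hshift, totient_mul_mul_prime_s11 ha hq (Nat.mul_pos hm ha0) hltq,
    totient_mul_mul_prime_s11 hb hp (Nat.mul_pos hm hb0) hltp, Nat.add_sub_cancel, Nat.add_sub_cancel,
    Nat.mul_left_comm a b n]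

theorem infinite_totient_eq_totient_add {a b k : ℕ} (hk : 0 < k) (hab : a < b)
    (hdvd : (b - a) * radical (a * b) ∣ k)
    (hinf : {n : ℕ | (a * n + 1).Prime ∧ (b * n + 1).Prime}.Infinite) :
    {n : ℕ | 0 < n ∧ n.totient = (n + k).totient}.Infinite := by
  obtain ⟨n₀, hp₀, -⟩ := hinf.nonempty
  have ha0 : 0 < a := Nat.pos_of_ne_zero fun h => Nat.not_prime_one (by simpa [h] using hp₀)
  have hab0 : a * b ≠ 0 := (Nat.mul_pos ha0 (ha0.trans hab)).ne'
  obtain ⟨c, hc⟩ := hdvd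
  set m := radical (a * b) * c with hm_def
  have hkm : k = m * (b - a) := by rw [hc, hm_def]; ring
  have hm : 0 < m := Nat.pos_of_ne_zero fun h => by simp [hkm, h] at hk
  have hma : radical a ∣ m :=
    (radical_dvd_radical (dvd_mul_right a b) hab0).trans (dvd_mul_right _ c)
  have hmb : radical b ∣ m :=
    (radical_dvd_radical (dvd_mul_left b a) hab0).trans (dvd_mul_right _ c)
  refine Set.infinite_of_forall_exists_gt fun N => ?_
  obtain ⟨n, ⟨hp, hq⟩, hn⟩ := hinf.exists_gt (max N (m * b))
  obtain ⟨hNn, hmn⟩ := max_lt_iff.1 hn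
  have hma0 : 0 < m * a := Nat.mul_pos hm ha0
  refine ⟨m * a * (b * n + 1), ⟨by positivity, ?_⟩, ?_⟩
  · rw [hkm]
    exact totient_eq_totient_add_of_prime hm hab hma hmb hp hq hmn
  · calc N < n := hNn
      _ ≤ b * n + 1 := by nlinarith
      _ ≤ m * a * (b * n + 1) := Nat.le_mul_of_pos_left _ hma0

theorem infinite_setOf_prime_of_mul_left {g a b : ℕ}
    (hinf : {n : ℕ | (g * a * n + 1).Prime ∧ (g * b * n + 1).Prime}.Infinite) :
    {n : ℕ | (a * n + 1).Prime ∧ (b * n + 1).Prime}.Infinite := by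
  obtain ⟨n₀, hp₀, -⟩ := hinf.nonempty
  have hg : g ≠ 0 := fun h => Nat.not_prime_one (by simpa [h] using hp₀)
  refine (hinf.image (mul_right_injective₀ hg).injOn).mono ?_
  rintro _ ⟨n, ⟨hp, hq⟩, rfl⟩
  constructor
  · convert hp using 2; ring
  · convert hq using 2; ring

/-- For slopes `a < b`, a number all of whose positive multiples `k` arise as shifts in
`φ n = φ (n + k)` from pairs of primes `a * n + 1`, `b * n + 1`. It depends only on the reduced
slopes `a / gcd a b` and `b / gcd a b`; for `b ≤ a` the truncated subtraction makes it `0`. -/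
noncomputable def shiftModulus (a b : ℕ) : ℕ :=
  (b / a.gcd b - a / a.gcd b) * radical (a / a.gcd b * (b / a.gcd b))

theorem infinite_totient_eq_totient_add_of_shiftModulus_dvd {a b k : ℕ} (hk : 0 < k)
    (hdvd : shiftModulus a b ∣ k)
    (hinf : {n : ℕ | (a * n + 1).Prime ∧ (b * n + 1).Prime}.Infinite) :
    {n : ℕ | 0 < n ∧ n.totient = (n + k).totient}.Infinite := by
  have hlt : a / a.gcd b < b / a.gcd b := by
    by_contra! hle
    rw [shiftModulus, Nat.sub_eq_zero_of_le hle, zero_mul, zero_dvd_iff] at hdvd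
    exact hk.ne' hdvd
  refine infinite_totient_eq_totient_add hk hlt hdvd
    (infinite_setOf_prime_of_mul_left (g := a.gcd b) ?_)
  rwa [Nat.mul_div_cancel' (Nat.gcd_dvd_left a b), Nat.mul_div_cancel' (Nat.gcd_dvd_right a b)]

theorem shiftModulus_dvd_thirty : ∀ i j : Fin 5, i < j →
    shiftModulus (![1, 2, 3, 4, 6] i) (![1, 2, 3, 4, 6] j) ∣ 30 := by
  -- `Nat.toFinset_factors` would fold the unfolded `Nat.primeFactors` back before it is evaluated.
  simp [Fin.forall_fin_succ, shiftModulus, Nat.radical_eq_prod_primeFactors, Nat.primeFactors,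
    -Nat.toFinset_factors]

theorem stmt_11_general
    (hpair : ∃ i j : Fin 5, i ≠ j ∧ {n : ℕ | 0 < n ∧ (![1, 2, 3, 4, 6] i * n + 1).Prime ∧
      (![1, 2, 3, 4, 6] j * n + 1).Prime}.Infinite)
    {k : ℕ} (hk : 0 < k) (hk30 : 30 ∣ k) :
    {n : ℕ | 0 < n ∧ n.totient = (n + k).totient}.Infinite := by
  obtain ⟨i, j, hij, hinf⟩ := hpair
  wlog hlt : i < j generalizing i j
  · exact this j i hij.symm (hinf.mono fun _ hn => ⟨hn.1, hn.2.2, hn.2.1⟩)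
      (hij.symm.lt_of_le (not_lt.1 hlt))
  exact infinite_totient_eq_totient_add_of_shiftModulus_dvd hk
    ((shiftModulus_dvd_thirty i j hlt).trans hk30) (hinf.mono fun _ hn => hn.2)

/-- Assuming the consequence of `DHL*(5;2)` (for any 5 pairwise distinct positive
integers some pair of forms `aᵢn+1`, `aⱼn+1` is simultaneously prime infinitely
often), `φ(n) = φ(n+k)` has infinitely many solutions for every positive `k`
divisible by `30`. -/
theorem stmt_11
    (hDHL : ∀ a : Fin 5 → ℕ, (∀ i, 0 < a i) → Function.Injective a →
      ∃ i j : Fin 5, i ≠ j ∧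
        {n : ℕ | 0 < n ∧ (a i * n + 1).Prime ∧ (a j * n + 1).Prime}.Infinite) :
    ∀ k : ℕ, 0 < k → 30 ∣ k →
      {n : ℕ | 0 < n ∧ Nat.totient n = Nat.totient (n + k)}.Infinite := by
  intro k hk hk30
  exact stmt_11_general (hDHL ![1, 2, 3, 4, 6] (by decide) (by decide)) hk hk30
end

section
/- Let A, ℓ, r be positive integers and let a₁, a₂ be distinct divisors of A with a₁·σ(a₂) = a₂·σ(a₁). Set bᵢ = A/aᵢ and pᵢ = bᵢ·r − 1 for i = 1, 2. Suppose gcd(ℓ, A) = 1, r > A, each pᵢ is prime, and pᵢ does not divide ℓ for i = 1, 2. Then the numbers tᵢ = ℓ·aᵢ·pᵢ satisfy t₁ = Aℓr − ℓa₁, t₂ = Aℓr − ℓa₂, and σ(t₁) = σ(t₂). -/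
/-- The sum-of-divisors function `σ`. -/
def sigma (n : ℕ) : ℕ := ∑ d ∈ n.divisors, d

/-!
By multiplicativity `σ(ℓaᵢpᵢ) = σ(ℓ)σ(aᵢ)(pᵢ + 1) = σ(ℓ)(σ(aᵢ)bᵢ)r`, and `σ(aᵢ)bᵢ = A·σ(aᵢ)/aᵢ` does
not depend on `i`. Multiplicativity needs `pᵢ ∤ aᵢ`: since `aᵢ ≤ A < r ≤ pᵢ + 1`, the only way this
could fail is `aᵢ = pᵢ`, but a prime shares its abundancy index `σ(n)/n` with no other number.
-/

theorem sigma_eq_arithmeticFunction_sigma_one (n : ℕ) : sigma n = ArithmeticFunction.sigma 1 n :=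
  (ArithmeticFunction.sigma_one_apply n).symm

theorem sigma_mul_of_coprime {m n : ℕ} (h : m.Coprime n) : sigma (m * n) = sigma m * sigma n := by
  simpa only [sigma_eq_arithmeticFunction_sigma_one] using
    ArithmeticFunction.isMultiplicative_sigma.map_mul_of_coprime h

theorem sigma_of_prime {p : ℕ} (hp : p.Prime) : sigma p = p + 1 := by
  rw [sigma, hp.sum_divisors]

theorem sigma_mul_mul_of_prime {ℓ a p : ℕ} (hp : p.Prime) (hℓa : ℓ.Coprime a)
    (hpℓ : ¬ p ∣ ℓ) (hpa : ¬ p ∣ a) :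
    sigma (ℓ * a * p) = sigma ℓ * sigma a * (p + 1) := by
  have hcop : (ℓ * a).Coprime p :=
    .symm (.mul_right (hp.coprime_iff_not_dvd.2 hpℓ) (hp.coprime_iff_not_dvd.2 hpa))
  rw [sigma_mul_of_coprime hcop, sigma_mul_of_coprime hℓa, sigma_of_prime hp]

theorem eq_of_prime_of_mul_sigma_eq {p c : ℕ} (hp : p.Prime) (hc : c ≠ 0)
    (h : p * sigma c = c * sigma p) : c = p := by
  have hsum : p * ∑ d ∈ c.properDivisors, d = c := by
    rw [sigma_of_prime hp, sigma, Nat.sum_divisors_eq_sum_properDivisors_add_self] at h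
    linarith
  rcases Nat.sum_properDivisors_dvd (Dvd.intro_left p hsum) with hone | hself
  · rw [← hsum, hone, mul_one]
  · rw [hself] at hsum
    exact absurd ((mul_eq_right₀ hc).1 hsum) hp.ne_one

theorem not_dvd_of_prime_of_mul_sigma_eq {p a c : ℕ} (hp : p.Prime) (ha : a ≠ 0) (hc : c ≠ 0)
    (hne : a ≠ c) (h : a * sigma c = c * sigma a) (hap : a ≤ p + 1) : ¬ p ∣ a := by
  intro hpa
  have hne_succ : a ≠ p + 1 := by
    rintro rfl
    exact hp.one_lt.ne' (Nat.dvd_one.1 ((Nat.dvd_add_right dvd_rfl).1 hpa))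
  obtain rfl : a = p :=
    le_antisymm (Nat.le_of_lt_succ (hap.lt_of_ne hne_succ)) (Nat.le_of_dvd ha.bot_lt hpa)
  exact hne (eq_of_prime_of_mul_sigma_eq hp hc h).symm

theorem sigma_mul_div_eq {A a₁ a₂ : ℕ} (ha₁ : a₁ ∣ A) (ha₂ : a₂ ∣ A)
    (h : a₁ * sigma a₂ = a₂ * sigma a₁) :
    sigma a₁ * (A / a₁) = sigma a₂ * (A / a₂) := by
  rcases A.eq_zero_or_pos with rfl | hA
  · simp only [Nat.zero_div, mul_zero]
  have hpos : 0 < a₁ * a₂ :=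
    Nat.mul_pos (Nat.pos_of_dvd_of_pos ha₁ hA) (Nat.pos_of_dvd_of_pos ha₂ hA)
  refine Nat.eq_of_mul_eq_mul_left hpos ?_
  calc a₁ * a₂ * (sigma a₁ * (A / a₁))
      = a₂ * sigma a₁ * (a₁ * (A / a₁)) := by ring
    _ = a₁ * sigma a₂ * (a₂ * (A / a₂)) := by
      rw [h, Nat.mul_div_cancel' ha₁, Nat.mul_div_cancel' ha₂]
    _ = a₁ * a₂ * (sigma a₂ * (A / a₂)) := by ring

theorem mul_mul_div_mul_sub_one {A a : ℕ} (ℓ r : ℕ) (ha : a ∣ A) :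
    ℓ * a * (A / a * r - 1) = A * ℓ * r - ℓ * a := by
  calc ℓ * a * (A / a * r - 1) = a * (A / a) * ℓ * r - ℓ * a := by
        rw [Nat.mul_sub, mul_one]; ring_nf
    _ = A * ℓ * r - ℓ * a := by rw [Nat.mul_div_cancel' ha]

theorem not_div_mul_sub_one_dvd {A a c r : ℕ} (hp : (A / a * r - 1).Prime) (hc : c ≠ 0)
    (hne : a ≠ c) (h : a * sigma c = c * sigma a) (har : a ≤ r) :
    ¬ A / a * r - 1 ∣ a := by
  have hdiv : A / a ≠ 0 := by
    intro hzero
    simp [hzero, Nat.not_prime_zero] at hp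
  have ha : a ≠ 0 := by
    rintro rfl
    exact hdiv A.div_zero
  have hle : a ≤ A / a * r := har.trans (Nat.le_mul_of_pos_left r hdiv.bot_lt)
  exact not_dvd_of_prime_of_mul_sigma_eq hp ha hc hne h (by lia)

theorem stmt_14_general {A ℓ r a₁ a₂ b₁ b₂ p₁ p₂ t₁ t₂ : ℕ} (ha₁ : a₁ ∣ A) (ha₂ : a₂ ∣ A)
    (hfriend : a₁ * sigma a₂ = a₂ * sigma a₁)
    (hb₁ : b₁ = A / a₁) (hb₂ : b₂ = A / a₂)
    (hp₁ : p₁ = b₁ * r - 1) (hp₂ : p₂ = b₂ * r - 1)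
    (hcop₁ : ℓ.Coprime a₁) (hcop₂ : ℓ.Coprime a₂)
    (hp₁p : p₁.Prime) (hp₂p : p₂.Prime)
    (hpℓ₁ : ¬ p₁ ∣ ℓ) (hpℓ₂ : ¬ p₂ ∣ ℓ) (hpa₁ : ¬ p₁ ∣ a₁) (hpa₂ : ¬ p₂ ∣ a₂)
    (ht₁ : t₁ = ℓ * a₁ * p₁) (ht₂ : t₂ = ℓ * a₂ * p₂) :
    t₁ = A * ℓ * r - ℓ * a₁ ∧ t₂ = A * ℓ * r - ℓ * a₂ ∧ sigma t₁ = sigma t₂ := by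
  have hsucc₁ : p₁ + 1 = b₁ * r := by have := hp₁p.pos; lia
  have hsucc₂ : p₂ + 1 = b₂ * r := by have := hp₂p.pos; lia
  have hindex : sigma a₁ * b₁ = sigma a₂ * b₂ := by
    rw [hb₁, hb₂, sigma_mul_div_eq ha₁ ha₂ hfriend]
  refine ⟨?_, ?_, ?_⟩
  · rw [ht₁, hp₁, hb₁, mul_mul_div_mul_sub_one ℓ r ha₁]
  · rw [ht₂, hp₂, hb₂, mul_mul_div_mul_sub_one ℓ r ha₂]
  · calc sigma t₁ = sigma ℓ * (sigma a₁ * b₁) * r := by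
          rw [ht₁, sigma_mul_mul_of_prime hp₁p hcop₁ hpℓ₁ hpa₁, hsucc₁]; ring
      _ = sigma ℓ * (sigma a₂ * b₂) * r := by rw [hindex]
      _ = sigma t₂ := by
          rw [ht₂, sigma_mul_mul_of_prime hp₂p hcop₂ hpℓ₂ hpa₂, hsucc₂]; ring

/-- If `a₁ ≠ a₂` divide `A` with `σ(a₁)/a₁ = σ(a₂)/a₂`, `bᵢ = A/aᵢ`,
`pᵢ = bᵢr - 1` prime with `pᵢ ∤ ℓ`, `gcd(ℓ,A) = 1` and `r > A`, then
`tᵢ = ℓ·aᵢ·pᵢ` satisfy `tᵢ = Aℓr - ℓaᵢ` and `σ(t₁) = σ(t₂)`. -/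
theorem stmt_14 (A ℓ r : ℕ) (hApos : 0 < A) (hl : 0 < ℓ) (hr : 0 < r)
    (a₁ a₂ : ℕ) (ha₁ : a₁ ∣ A) (ha₂ : a₂ ∣ A) (hne : a₁ ≠ a₂)
    (hfriend : a₁ * sigma a₂ = a₂ * sigma a₁)
    (b₁ b₂ p₁ p₂ t₁ t₂ : ℕ)
    (hb₁ : b₁ = A / a₁) (hb₂ : b₂ = A / a₂)
    (hp₁ : p₁ = b₁ * r - 1) (hp₂ : p₂ = b₂ * r - 1)
    (hcop : Nat.gcd ℓ A = 1) (hrA : A < r)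
    (hp₁p : p₁.Prime) (hp₂p : p₂.Prime)
    (hnd₁ : ¬ p₁ ∣ ℓ) (hnd₂ : ¬ p₂ ∣ ℓ)
    (ht₁ : t₁ = ℓ * a₁ * p₁) (ht₂ : t₂ = ℓ * a₂ * p₂) :
    t₁ = A * ℓ * r - ℓ * a₁ ∧ t₂ = A * ℓ * r - ℓ * a₂ ∧ sigma t₁ = sigma t₂ := by
  have hle {a : ℕ} (ha : a ∣ A) : a ≤ r := (Nat.le_of_dvd hApos ha).trans hrA.le
  have hne_zero {a : ℕ} (ha : a ∣ A) : a ≠ 0 := ne_zero_of_dvd_ne_zero hApos.ne' ha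
  subst hb₁ hb₂ hp₁ hp₂
  exact stmt_14_general ha₁ ha₂ hfriend rfl rfl rfl rfl
    (.coprime_dvd_right ha₁ hcop) (.coprime_dvd_right ha₂ hcop) hp₁p hp₂p hnd₁ hnd₂
    (not_div_mul_sub_one_dvd hp₁p (hne_zero ha₂) hne hfriend (hle ha₁))
    (not_div_mul_sub_one_dvd hp₂p (hne_zero ha₁) hne.symm hfriend.symm (hle ha₂)) ht₁ ht₂
end
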